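/- arXiv:2112.11393 — 7 statements merged into one kernel-verified Lean document; each statement's English description precedes it below -/
import Mathlib

section
/- Let F be a finite field, t and n natural numbers with t < n, and α_1,…,α_n distinct nonzero elements of F. For all s, s' ∈ F, every subset I ⊆ {1,…,n} with |I| ≤ t, and every family (y_i)_{i∈I} of elements of F, the number of polynomials f over F of degree at most t with f(0) = s and f(α_i) = y_i for all i ∈ I equals the number of polynomials g over F of degree at most t with g(0) = s' and g(α_i) = y_i for all i ∈ I. (This is the counting formulation of the statement that, for a uniformly random polynomial of degree at most t with prescribed constant term, the joint distribution of its values at any at most t of the points α_1,…,α_n is independent of the constant term.) -/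
open Polynomial

/-!
Polynomials of degree at most `t` matching given data form an affine space: the sum of a
polynomial matching one set of data and a polynomial matching another matches the sum of the data.
A suitable multiple of `∏ i ∈ I, (X - α i)` vanishes at every `α i` and takes any prescribed value
at `0`, so translating by it changes the secret and leaves the shares of the parties in `I` alone.
-/

section SharingPolynomials

variable {R ι : Type*} [CommRing R]

/-- The polynomials of degree at most `t` that share the secret `s` and give the share `y i` to
each party `i ∈ I`. The secret is the value at a point `x`, which is `0` in Shamir's scheme, and
the share of party `i` is the value at `v i`; only the values of `y` on `I` matter. -/
def sharingPolynomials (t : ℕ) (x : R) (v : ι → R) (I : Finset ι) (s : R) (y : ι → R) :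
    Set R[X] :=
  {f | f.natDegree ≤ t ∧ f.eval x = s ∧ ∀ i ∈ I, f.eval (v i) = y i}

namespace sharingPolynomials

variable {t : ℕ} {x s s' : R} {v y y' : ι → R} {I : Finset ι} {f g : R[X]}

theorem add_mem (hf : f ∈ sharingPolynomials t x v I s y)
    (hg : g ∈ sharingPolynomials t x v I s' y') :
    f + g ∈ sharingPolynomials t x v I (s + s') (y + y') := by
  obtain ⟨hf_deg, hf_secret, hf_share⟩ := hf
  obtain ⟨hg_deg, hg_secret, hg_share⟩ := hg
  refine ⟨natDegree_add_le_of_degree_le hf_deg hg_deg, ?_, fun i hi ↦ ?_⟩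
  · rw [eval_add, hf_secret, hg_secret]
  · rw [eval_add, hf_share i hi, hg_share i hi, Pi.add_apply]

theorem neg_mem (hf : f ∈ sharingPolynomials t x v I s y) :
    -f ∈ sharingPolynomials t x v I (-s) (-y) := by
  obtain ⟨hf_deg, hf_secret, hf_share⟩ := hf
  refine ⟨natDegree_neg_le_of_le hf_deg, ?_, fun i hi ↦ ?_⟩
  · rw [eval_neg, hf_secret]
  · rw [eval_neg, hf_share i hi, Pi.neg_apply]

theorem image_add_left (hf : f ∈ sharingPolynomials t x v I s y) (s' : R) (y' : ι → R) :
    (f + ·) '' sharingPolynomials t x v I s' y' =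
      sharingPolynomials t x v I (s + s') (y + y') := by
  refine Set.Subset.antisymm (Set.image_subset_iff.2 fun g hg ↦ add_mem hf hg) fun g hg ↦ ?_
  refine ⟨-f + g, ?_, add_neg_cancel_left f g⟩
  simpa only [neg_add_cancel_left] using add_mem (neg_mem hf) hg

theorem nonempty_zero_shares (hI : I.card ≤ t) (hv : ∀ i ∈ I, IsUnit (x - v i)) (s : R) :
    (sharingPolynomials t x v I s 0).Nonempty := by
  set q := Lagrange.nodal I v
  obtain ⟨c, hc⟩ : ∃ c, c * q.eval x = 1 := by
    rw [← isUnit_iff_exists_inv', Lagrange.eval_nodal]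
    exact IsUnit.prod_iff.2 hv
  have hq_deg : q.natDegree ≤ t := by
    nontriviality R
    exact Lagrange.natDegree_nodal.trans_le hI
  refine ⟨C (s * c) * q, (natDegree_C_mul_le _ _).trans hq_deg, ?_, fun i hi ↦ ?_⟩
  · rw [eval_mul, eval_C, mul_assoc, hc, mul_one]
  · rw [eval_mul, Lagrange.eval_nodal_at_node hi, mul_zero, Pi.zero_apply]

end sharingPolynomials

theorem stmt_0_general {t : ℕ} {x : R} {v : ι → R} {I : Finset ι} (hI : I.card ≤ t)
    (hv : ∀ i ∈ I, IsUnit (x - v i)) (s s' : R) (y : ι → R) :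
    Cardinal.mk (sharingPolynomials t x v I s y) =
      Cardinal.mk (sharingPolynomials t x v I s' y) := by
  obtain ⟨p, hp⟩ := sharingPolynomials.nonempty_zero_shares hI hv (s' - s)
  have translate := sharingPolynomials.image_add_left hp s y
  rw [sub_add_cancel, zero_add] at translate
  rw [← translate, Cardinal.mk_image_eq (add_right_injective p)]

end SharingPolynomials

/-- Counting formulation of the privacy of Shamir secret sharing: for any at most `t`
evaluation points among the distinct nonzero `α i` and any prescribed values there, the
number of degree-`≤ t` polynomials with constant term `s` matching those values equals the
number with constant term `s'`. -/
theorem stmt_0 (F : Type*) [Field F] [Fintype F] (t n : ℕ) (htn : t < n)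
    (α : Fin n → F) (hα : Function.Injective α) (hα0 : ∀ i, α i ≠ 0)
    (s s' : F) (I : Finset (Fin n)) (hI : I.card ≤ t) (y : Fin n → F) :
    {f : F[X] | f.natDegree ≤ t ∧ f.eval 0 = s ∧ ∀ i ∈ I, f.eval (α i) = y i}.ncard =
    {g : F[X] | g.natDegree ≤ t ∧ g.eval 0 = s' ∧ ∀ i ∈ I, g.eval (α i) = y i}.ncard :=
  congrArg Cardinal.toNat <|
    stmt_0_general hI (fun i _ ↦ (sub_ne_zero.2 (hα0 i).symm).isUnit) s s' y
end

section
/- Let F be a field, α_1,…,α_n distinct nonzero elements of F, and ℓ, m natural numbers. Let A, B ⊆ {1,…,n} with |A| ≥ m + 1 and |B| ≥ ℓ + 1. Suppose (f_i)_{i∈A} are polynomials over F of degree at most ℓ and (g_j)_{j∈B} are polynomials over F of degree at most m such that f_i(α_j) = g_j(α_i) for every i ∈ A and every j ∈ B. Then there exists a unique bivariate polynomial F*(x,y) over F of degree at most (ℓ,m) such that F*(x, α_i) = f_i(x) for every i ∈ A and F*(α_j, y) = g_j(y) for every j ∈ B. -/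
open Polynomial

/-!
Take `ℓ + 1` of the columns and interpolate them in the `x`-direction, coefficient by coefficient
in `y`. The result has degree at most `(ℓ, m)` and restricts to the chosen columns. A row of it
agrees with `f i` at the `ℓ + 1` chosen points, hence equals `f i`; every remaining column then
agrees with `g j` at `m + 1` points, hence equals `g j`. A polynomial of `x`-degree at most `ℓ` is
determined by `ℓ + 1` of its columns, because each of its coefficients is.
-/

open scoped Polynomial.Bivariate

theorem exists_finset_coe_subset_card_eq {ι : Type*} {s : Set ι} {k : ℕ} (hk : k ≤ s.encard) :
    ∃ t : Finset ι, ↑t ⊆ s ∧ t.card = k := by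
  obtain ⟨t, hts, htk⟩ := Set.exists_subset_encard_eq hk
  lift t to Finset ι using Set.finite_of_encard_eq_coe htk
  exact ⟨t, hts, by simpa using htk⟩

theorem natDegree_eval_C_le {R : Type*} [Semiring R] {P : R[X][Y]} {d : ℕ}
    (hP : ∀ k, (P.coeff k).natDegree ≤ d) (c : R) : (P.eval (C c)).natDegree ≤ d := by
  rw [eval_eq_sum_range]
  refine natDegree_sum_le_of_forall_le _ _ fun k _ => ?_
  rw [← C_pow]
  exact (natDegree_mul_C_le _ _).trans (hP k)

section Uniqueness

variable {R ι : Type*} [CommRing R] [IsDomain R] {s : Finset ι} {v : ι → R} {d : ℕ}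

theorem eq_of_natDegree_le_of_eval_eq {p q : R[X]} (hv : Set.InjOn v s) (hd : d < s.card)
    (hp : p.natDegree ≤ d) (hq : q.natDegree ≤ d)
    (hpq : ∀ i ∈ s, p.eval (v i) = q.eval (v i)) : p = q :=
  have degree_lt {r : R[X]} (hr : r.natDegree ≤ d) : r.degree < s.card :=
    (natDegree_le_iff_degree_le.mp hr).trans_lt (mod_cast hd)
  eq_of_degrees_lt_of_eval_index_eq s hv (degree_lt hp) (degree_lt hq) hpq

theorem eq_of_natDegree_coeff_le_of_map_evalRingHom_eq {P Q : R[X][Y]} (hv : Set.InjOn v s)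
    (hd : d < s.card) (hP : ∀ k, (P.coeff k).natDegree ≤ d)
    (hQ : ∀ k, (Q.coeff k).natDegree ≤ d)
    (hPQ : ∀ i ∈ s, P.map (evalRingHom (v i)) = Q.map (evalRingHom (v i))) : P = Q := by
  ext1 k
  refine eq_of_natDegree_le_of_eval_eq hv hd (hP k) (hQ k) fun i hi => ?_
  simpa only [coeff_map, coe_evalRingHom] using congrArg (coeff · k) (hPQ i hi)

end Uniqueness

section ColumnInterpolant

variable {F ι : Type*} [Field F] [DecidableEq ι] {s : Finset ι} {v : ι → F}

/-- The bivariate Lagrange interpolant `∑ i ∈ s, gᵢ(y) Lᵢ(x)`, where `Lᵢ` is the Lagrange basis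
polynomial of the node `v i`; its restriction to the column `x = v i` is `g i`. -/
noncomputable def columnInterpolant (s : Finset ι) (v : ι → F) (g : ι → F[X]) : F[X][Y] :=
  ∑ i ∈ s, (g i).map C * C (Lagrange.basis s v i)

theorem coeff_columnInterpolant (s : Finset ι) (v : ι → F) (g : ι → F[X]) (k : ℕ) :
    (columnInterpolant s v g).coeff k = Lagrange.interpolate s v fun i => (g i).coeff k := by
  simp only [columnInterpolant, finsetSum_coeff, coeff_mul_C, coeff_map,
    Lagrange.interpolate_apply]

theorem natDegree_coeff_columnInterpolant_le (hv : Set.InjOn v s) (g : ι → F[X]) (k : ℕ) :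
    ((columnInterpolant s v g).coeff k).natDegree ≤ s.card - 1 := by
  rw [coeff_columnInterpolant]
  exact natDegree_le_of_degree_le (Lagrange.degree_interpolate_le _ hv)

theorem natDegree_columnInterpolant_le {g : ι → F[X]} {d : ℕ}
    (hg : ∀ i ∈ s, (g i).natDegree ≤ d) (v : ι → F) :
    (columnInterpolant s v g).natDegree ≤ d :=
  natDegree_sum_le_of_forall_le _ _ fun i hi =>
    (natDegree_mul_C_le _ _).trans (natDegree_map_le.trans (hg i hi))

theorem map_evalRingHom_columnInterpolant (hv : Set.InjOn v s) (g : ι → F[X]) {i : ι}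
    (hi : i ∈ s) : (columnInterpolant s v g).map (evalRingHom (v i)) = g i := by
  ext k
  rw [coeff_map, coe_evalRingHom, coeff_columnInterpolant,
    Lagrange.eval_interpolate_at_node _ hv hi]

end ColumnInterpolant

section Consistency

variable {R ι : Type*} [CommRing R] [IsDomain R] {s : Finset ι} {v : ι → R} {P : R[X][Y]} {d : ℕ}

theorem eval_C_eq_of_map_evalRingHom_eq {p : R[X]} {g : ι → R[X]} {y : R} (hv : Set.InjOn v s)
    (hd : d < s.card) (hP : ∀ k, (P.coeff k).natDegree ≤ d) (hp : p.natDegree ≤ d)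
    (hcol : ∀ j ∈ s, P.map (evalRingHom (v j)) = g j)
    (hcons : ∀ j ∈ s, p.eval (v j) = (g j).eval y) : P.eval (C y) = p :=
  eq_of_natDegree_le_of_eval_eq hv hd (natDegree_eval_C_le hP y) hp fun j hj => by
    rw [hcons j hj, ← hcol j hj, map_evalRingHom_eval]

theorem map_evalRingHom_eq_of_eval_C_eq {f : ι → R[X]} {q : R[X]} {x : R} (hv : Set.InjOn v s)
    (hd : d < s.card) (hP : P.natDegree ≤ d) (hq : q.natDegree ≤ d)
    (hrow : ∀ i ∈ s, P.eval (C (v i)) = f i)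
    (hcons : ∀ i ∈ s, (f i).eval x = q.eval (v i)) : P.map (evalRingHom x) = q :=
  eq_of_natDegree_le_of_eval_eq hv hd (natDegree_map_le.trans hP) hq fun i hi => by
    rw [← hcons i hi, ← hrow i hi, map_evalRingHom_eval]

end Consistency

theorem stmt_2_general {F ι κ : Type*} [Field F] {ℓ m : ℕ} {a : ι → F} {b : κ → F}
    {A : Set ι} {B : Set κ} (ha : Set.InjOn a A) (hb : Set.InjOn b B)
    (hA : (m + 1 : ℕ) ≤ A.encard) (hB : (ℓ + 1 : ℕ) ≤ B.encard) {f : ι → F[X]} {g : κ → F[X]}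
    (hf : ∀ i ∈ A, (f i).natDegree ≤ ℓ) (hg : ∀ j ∈ B, (g j).natDegree ≤ m)
    (hcons : ∀ i ∈ A, ∀ j ∈ B, (f i).eval (b j) = (g j).eval (a i)) :
    ∃! P : F[X][Y],
      ((∀ k, (P.coeff k).natDegree ≤ ℓ) ∧ P.natDegree ≤ m) ∧
      (∀ i ∈ A, P.eval (C (a i)) = f i) ∧
      (∀ j ∈ B, P.map (evalRingHom (b j)) = g j) := by
  classical
  obtain ⟨A', hA'A, hA'⟩ := exists_finset_coe_subset_card_eq hA
  obtain ⟨B', hB'B, hB'⟩ := exists_finset_coe_subset_card_eq hB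
  have hb' : Set.InjOn b B' := hb.mono hB'B
  have hx k : ((columnInterpolant B' b g).coeff k).natDegree ≤ ℓ := by
    simpa only [hB', Nat.add_sub_cancel] using natDegree_coeff_columnInterpolant_le hb' g k
  have hy : (columnInterpolant B' b g).natDegree ≤ m :=
    natDegree_columnInterpolant_le (fun j hj => hg j (hB'B hj)) b
  have hrow : ∀ i ∈ A, (columnInterpolant B' b g).eval (C (a i)) = f i := fun i hi =>
    eval_C_eq_of_map_evalRingHom_eq hb' (by lia) hx (hf i hi)
      (fun _ => map_evalRingHom_columnInterpolant hb' g) fun j hj => hcons i hi j (hB'B hj)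
  have hcol : ∀ j ∈ B, (columnInterpolant B' b g).map (evalRingHom (b j)) = g j := fun j hj =>
    map_evalRingHom_eq_of_eval_C_eq (ha.mono hA'A) (by lia) hy (hg j hj)
      (fun i hi => hrow i (hA'A hi)) fun i hi => hcons i (hA'A hi) j hj
  refine ⟨columnInterpolant B' b g, ⟨⟨hx, hy⟩, hrow, hcol⟩, ?_⟩
  rintro Q ⟨⟨hQ, -⟩, -, hQcol⟩
  exact eq_of_natDegree_coeff_le_of_map_evalRingHom_eq hb' (by lia) hQ hx fun j hj =>
    (hQcol j (hB'B hj)).trans (hcol j (hB'B hj)).symm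

/-- Pair-wise consistency lemma: pairwise consistent row polynomials `f i` (degree ≤ ℓ,
for `i ∈ A` with `|A| ≥ m + 1`) and column polynomials `g j` (degree ≤ m, for `j ∈ B` with
`|B| ≥ ℓ + 1`) lie on a unique bivariate polynomial of degree at most `(ℓ, m)`.
A bivariate polynomial `F(x,y)` is represented as `P : Polynomial (Polynomial F)`, a
polynomial in `y` whose coefficients are polynomials in `x`; then `F(x, α) = P.eval (C α)`
and `F(α, y) = P.map (evalRingHom α)`. -/
theorem stmt_2 (F : Type*) [Field F] (n ℓ m : ℕ)
    (α : Fin n → F) (hα : Function.Injective α) (hα0 : ∀ i, α i ≠ 0)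
    (A B : Finset (Fin n)) (hA : m + 1 ≤ A.card) (hB : ℓ + 1 ≤ B.card)
    (f g : Fin n → F[X])
    (hf : ∀ i ∈ A, (f i).natDegree ≤ ℓ) (hg : ∀ j ∈ B, (g j).natDegree ≤ m)
    (hcons : ∀ i ∈ A, ∀ j ∈ B, (f i).eval (α j) = (g j).eval (α i)) :
    ∃! P : Polynomial (Polynomial F),
      ((∀ k, (P.coeff k).natDegree ≤ ℓ) ∧ P.natDegree ≤ m) ∧
      (∀ i ∈ A, P.eval (Polynomial.C (α i)) = f i) ∧
      (∀ j ∈ B, P.map (evalRingHom (α j)) = g j) :=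
  stmt_2_general (A := (A : Set (Fin n))) (B := (B : Set (Fin n))) hα.injOn hα.injOn
    (by simpa using mod_cast hA) (by simpa using mod_cast hB) hf hg hcons
end

section
/- Let F be a finite field, α_1,…,α_n distinct nonzero elements of F, t < n, and C ⊆ {1,…,n} with |C| ≤ t. Let q_1 and q_2 be polynomials over F of degree at most t with q_1(α_i) = q_2(α_i) for all i ∈ C. Then for every family ((u_i, v_i))_{i∈C} of pairs of polynomials over F, each of degree at most t, the number of bivariate polynomials F(x,y) of degree at most (t,t) satisfying F(0,y) = q_1(y), F(x,α_i) = u_i(x) for all i ∈ C, and F(α_i,y) = v_i(y) for all i ∈ C, equals the number of bivariate polynomials F'(x,y) of degree at most (t,t) satisfying F'(0,y) = q_2(y), F'(x,α_i) = u_i(x) for all i ∈ C, and F'(α_i,y) = v_i(y) for all i ∈ C. (This is the counting formulation of the statement that the joint distribution of the row and column polynomials of the parties in C, when the bivariate polynomial is chosen uniformly at random subject to F(0,y) = q, is the same for q = q_1 and q = q_2.) -/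
open Polynomial

/-! Choose `w` of degree at most `t` with `w(0) = 1` and `w(α i) = 0` for every corrupt `i`. Adding
`w(x) · (q₂ - q₁)(y)` to `F` changes `F(0, y)` from `q₁` to `q₂`; it leaves the corrupt columns
alone because `w(α i) = 0`, and the corrupt rows alone because `q₁` and `q₂` agree at `α i`. So a
translation embeds one set of polynomials into the other, and conversely by symmetry. -/

section Bivariate

variable {R : Type*}

section Semiring

variable [Semiring R] {ℓ m : ℕ}

/-- `P(x, y)` has degree at most `(ℓ, m)`, that is, at most `ℓ` in `x` and at most `m` in `y`.
The outer variable is `y`, and the coefficients are polynomials in `x`. -/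
def HasBidegreeLE (ℓ m : ℕ) (P : R[X][X]) : Prop :=
  (∀ k, (P.coeff k).natDegree ≤ ℓ) ∧ P.natDegree ≤ m

theorem HasBidegreeLE.add {P Q : R[X][X]} (hP : HasBidegreeLE ℓ m P) (hQ : HasBidegreeLE ℓ m Q) :
    HasBidegreeLE ℓ m (P + Q) := by
  refine ⟨fun k => ?_, natDegree_add_le_of_degree_le hP.2 hQ.2⟩
  rw [coeff_add]
  exact natDegree_add_le_of_degree_le (hP.1 k) (hQ.1 k)

/-- The bivariate polynomial `w(x) · d(y)`, encoded with outer variable `y`. -/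
noncomputable def outerMul (w d : R[X]) : R[X][X] :=
  C w * d.map C

theorem hasBidegreeLE_outerMul {w d : R[X]} (hw : w.natDegree ≤ ℓ) (hd : d.natDegree ≤ m) :
    HasBidegreeLE ℓ m (outerMul w d) := by
  refine ⟨fun k => ?_, (natDegree_C_mul_le _ _).trans (natDegree_map_le.trans hd)⟩
  rw [outerMul, coeff_C_mul, coeff_map]
  exact (natDegree_mul_C_le _ _).trans hw

end Semiring

variable [CommSemiring R]

theorem eval_C_outerMul (w d : R[X]) (a : R) :
    (outerMul w d).eval (C a) = w * C (d.eval a) := by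
  rw [outerMul, eval_mul, eval_C, eval_map, eval₂_at_apply]

theorem map_evalRingHom_outerMul (w d : R[X]) (a : R) :
    (outerMul w d).map (evalRingHom a) = C (w.eval a) * d := by
  have evalRingHom_comp_C : (evalRingHom a).comp C = RingHom.id R := by
    ext
    simp
  rw [outerMul, Polynomial.map_mul, map_map, evalRingHom_comp_C, map_id, map_C, coe_evalRingHom]

end Bivariate

section Sharing

variable {R ι : Type*}

/-- The bivariate polynomials `P(x, y)` of degree at most `(ℓ, m)` that share `q`, in the sense that
`P(0, y) = q(y)`, and in which each party `i ∈ s` sees the row `P(x, α i) = u i` and the column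
`P(α i, y) = v i`. -/
def sharings [CommSemiring R] (ℓ m : ℕ) (α : ι → R) (s : Finset ι) (q : R[X]) (u v : ι → R[X]) :
    Set R[X][X] :=
  {P | HasBidegreeLE ℓ m P ∧ P.map (evalRingHom 0) = q ∧
    (∀ i ∈ s, P.eval (C (α i)) = u i) ∧ ∀ i ∈ s, P.map (evalRingHom (α i)) = v i}

theorem add_outerMul_mem_sharings [CommSemiring R] {ℓ m : ℕ} {α : ι → R} {s : Finset ι}
    {q w d : R[X]} {u v : ι → R[X]} {P : R[X][X]} (hP : P ∈ sharings ℓ m α s q u v)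
    (hw : w.natDegree ≤ ℓ) (hw_zero : w.eval 0 = 1) (hw_node : ∀ i ∈ s, w.eval (α i) = 0)
    (hd : d.natDegree ≤ m) (hd_node : ∀ i ∈ s, d.eval (α i) = 0) :
    P + outerMul w d ∈ sharings ℓ m α s (q + d) u v := by
  obtain ⟨hdeg, hshare, hrow, hcol⟩ := hP
  refine ⟨hdeg.add (hasBidegreeLE_outerMul hw hd), ?_, fun i hi => ?_, fun i hi => ?_⟩
  · rw [Polynomial.map_add, map_evalRingHom_outerMul, hshare, hw_zero, C_1, one_mul]
  · rw [eval_add, eval_C_outerMul, hrow i hi, hd_node i hi, C_0, mul_zero, add_zero]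
  · rw [Polynomial.map_add, map_evalRingHom_outerMul, hcol i hi, hw_node i hi, C_0, zero_mul,
      add_zero]

variable [CommRing R]

theorem exists_natDegree_le_card_eval_eq_one {α : ι → R} {s : Finset ι} {x : R}
    (hx : ∀ i ∈ s, IsUnit (x - α i)) :
    ∃ w : R[X], w.natDegree ≤ s.card ∧ w.eval x = 1 ∧ ∀ i ∈ s, w.eval (α i) = 0 := by
  nontriviality R
  have isUnit_eval_nodal : IsUnit ((Lagrange.nodal s α).eval x) := by
    rw [Lagrange.eval_nodal]
    exact IsUnit.prod_iff.mpr hx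
  obtain ⟨c, hc⟩ := isUnit_eval_nodal.exists_left_inv
  refine ⟨C c * Lagrange.nodal s α, ?_, by rw [eval_C_mul, hc], fun i hi => ?_⟩
  · exact (natDegree_C_mul_le _ _).trans Lagrange.natDegree_nodal.le
  · rw [eval_C_mul, Lagrange.eval_nodal_at_node hi, mul_zero]

variable {ℓ m : ℕ} {α : ι → R} {s : Finset ι} {q₁ q₂ : R[X]}

theorem encard_sharings_le (hα : ∀ i ∈ s, IsUnit (α i)) (hs : s.card ≤ ℓ)
    (hq₁ : q₁.natDegree ≤ m) (hq₂ : q₂.natDegree ≤ m)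
    (hagree : ∀ i ∈ s, q₁.eval (α i) = q₂.eval (α i)) (u v : ι → R[X]) :
    (sharings ℓ m α s q₁ u v).encard ≤ (sharings ℓ m α s q₂ u v).encard := by
  obtain ⟨w, hw, hw_zero, hw_node⟩ :=
    exists_natDegree_le_card_eval_eq_one (α := α) (s := s) (x := 0)
      fun i hi => by simpa only [zero_sub, IsUnit.neg_iff] using hα i hi
  have hd : (q₂ - q₁).natDegree ≤ m := (natDegree_sub_le_of_le hq₂ hq₁).trans_eq (max_self m)
  have hd_node : ∀ i ∈ s, (q₂ - q₁).eval (α i) = 0 := fun i hi => by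
    rw [eval_sub, hagree i hi, sub_self]
  refine Set.encard_le_encard_of_injOn (f := (· + outerMul w (q₂ - q₁))) (fun P hP => ?_)
    (add_left_injective _).injOn
  simpa only [add_sub_cancel] using
    add_outerMul_mem_sharings hP (hw.trans hs) hw_zero hw_node hd hd_node

theorem stmt_4_general (hα : ∀ i ∈ s, IsUnit (α i)) (hs : s.card ≤ ℓ)
    (hq₁ : q₁.natDegree ≤ m) (hq₂ : q₂.natDegree ≤ m)
    (hagree : ∀ i ∈ s, q₁.eval (α i) = q₂.eval (α i)) (u v : ι → R[X]) :
    (sharings ℓ m α s q₁ u v).encard = (sharings ℓ m α s q₂ u v).encard :=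
  le_antisymm (encard_sharings_le hα hs hq₁ hq₂ hagree u v)
    (encard_sharings_le hα hs hq₂ hq₁ (fun i hi => (hagree i hi).symm) u v)

end Sharing

/-- Counting formulation of the privacy of bivariate-polynomial based VSS: for any set
`Cs` of at most `t` corrupt parties and any prescribed row polynomials `u i` and column
polynomials `v i` for `i ∈ Cs` (each of degree at most `t`), the number of bivariate
polynomials of degree at most `(t,t)` with `F(0,y) = q₁` and those rows/columns equals the
number with `F(0,y) = q₂`, whenever `q₁, q₂` are degree-`≤ t` polynomials agreeing at the
points `α i`, `i ∈ Cs`.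
A bivariate polynomial `F(x,y)` is represented as `P : Polynomial (Polynomial F)`
(polynomial in `y` with coefficients polynomials in `x`): `F(x, α) = P.eval (C α)`,
`F(α, y) = P.map (evalRingHom α)`, and in particular `F(0, y) = P.map (evalRingHom 0)`. -/
theorem stmt_4 (F : Type*) [Field F] [Fintype F] (n t : ℕ) (htn : t < n)
    (α : Fin n → F) (hα : Function.Injective α) (hα0 : ∀ i, α i ≠ 0)
    (Cs : Finset (Fin n)) (hCs : Cs.card ≤ t)
    (q₁ q₂ : F[X]) (hq₁ : q₁.natDegree ≤ t) (hq₂ : q₂.natDegree ≤ t)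
    (hagree : ∀ i ∈ Cs, q₁.eval (α i) = q₂.eval (α i))
    (u v : Fin n → F[X])
    (hu : ∀ i ∈ Cs, (u i).natDegree ≤ t) (hv : ∀ i ∈ Cs, (v i).natDegree ≤ t) :
    {P : Polynomial (Polynomial F) |
        ((∀ k, (P.coeff k).natDegree ≤ t) ∧ P.natDegree ≤ t) ∧
        P.map (evalRingHom 0) = q₁ ∧
        (∀ i ∈ Cs, P.eval (Polynomial.C (α i)) = u i) ∧
        (∀ i ∈ Cs, P.map (evalRingHom (α i)) = v i)}.ncard =
    {P : Polynomial (Polynomial F) |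
        ((∀ k, (P.coeff k).natDegree ≤ t) ∧ P.natDegree ≤ t) ∧
        P.map (evalRingHom 0) = q₂ ∧
        (∀ i ∈ Cs, P.eval (Polynomial.C (α i)) = u i) ∧
        (∀ i ∈ Cs, P.map (evalRingHom (α i)) = v i)}.ncard :=
  congrArg ENat.toNat <| stmt_4_general (fun i _ => (hα0 i).isUnit) hCs hq₁ hq₂ hagree u v
end

section
/- Let F be a field, d and r natural numbers, α_1,…,α_N distinct elements of F with N ≥ d + 2r + 1, and w_1,…,w_N ∈ F. If q_1 and q_2 are polynomials over F of degree at most d such that the number of indices i with q_1(α_i) ≠ w_i is at most r and the number of indices i with q_2(α_i) ≠ w_i is at most r, then q_1 = q_2. (This is the uniqueness guarantee underlying Reed–Solomon error correction of up to r incorrect shares from N ≥ d + 2r + 1 shares of a degree-d polynomial.) -/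
/-!
Distinct polynomials of degree at most `d` agree at no more than `d` of the `N` points, so their
words of values are at Hamming distance at least `N - d > 2 * r`. By the triangle inequality, no
word is within distance `r` of both.
-/

open Polynomial

theorem hammingDist_eq_ncard {ι : Type*} [Fintype ι] {β : ι → Type*} [∀ i, DecidableEq (β i)]
    (x y : ∀ i, β i) : hammingDist x y = {i | x i ≠ y i}.ncard := by
  rw [hammingDist, ← Set.ncard_coe_finset, Finset.coe_filter_univ]

section Evaluation

variable {R ι : Type*} [CommRing R] [IsDomain R] [Fintype ι] {α : ι → R} {p q : R[X]}

theorem card_filter_eval_eq_le_max_natDegree [DecidableEq R] (hα : Function.Injective α)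
    (hpq : p ≠ q) :
    Finset.card {i | p.eval (α i) = q.eval (α i)} ≤ max p.natDegree q.natDegree := by
  rw [← Fintype.card_subtype]
  contrapose! hpq
  exact eq_of_natDegree_lt_card_of_eval_eq p q (hα.comp Subtype.val_injective)
    (fun i ↦ i.property) hpq

theorem card_le_max_natDegree_add_hammingDist_eval [DecidableEq R] (hα : Function.Injective α)
    (hpq : p ≠ q) :
    Fintype.card ι ≤ max p.natDegree q.natDegree +
      hammingDist (fun i ↦ p.eval (α i)) (fun i ↦ q.eval (α i)) :=
  calc
    Fintype.card ι = Finset.card {i | p.eval (α i) = q.eval (α i)} +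
        hammingDist (fun i ↦ p.eval (α i)) (fun i ↦ q.eval (α i)) :=
      (Finset.card_filter_add_card_filter_not _).symm
    _ ≤ _ := Nat.add_le_add_right (card_filter_eval_eq_le_max_natDegree hα hpq) _

theorem stmt_6_general {d r : ℕ} (hcard : d + 2 * r + 1 ≤ Fintype.card ι)
    (hα : Function.Injective α) {w : ι → R} (hp : p.natDegree ≤ d) (hq : q.natDegree ≤ d)
    (hpw : {i | p.eval (α i) ≠ w i}.ncard ≤ r) (hqw : {i | q.eval (α i) ≠ w i}.ncard ≤ r) :
    p = q := by
  classical
  rw [← hammingDist_eq_ncard] at hpw hqw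
  by_contra hpq
  have min_distance := card_le_max_natDegree_add_hammingDist_eval hα hpq
  have triangle := hammingDist_triangle_right (fun i ↦ p.eval (α i)) (fun i ↦ q.eval (α i)) w
  have degree_le : max p.natDegree q.natDegree ≤ d := max_le hp hq
  omega

end Evaluation

/-- Uniqueness underlying Reed–Solomon error correction: if `N ≥ d + 2r + 1` and two
degree-`≤ d` polynomials each disagree with the received word `w` in at most `r`
positions, then they are equal. -/
theorem stmt_6 (F : Type*) [Field F] (d r N : ℕ) (hN : d + 2 * r + 1 ≤ N)
    (α : Fin N → F) (hα : Function.Injective α) (w : Fin N → F)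
    (q₁ q₂ : F[X]) (hq₁ : q₁.natDegree ≤ d) (hq₂ : q₂.natDegree ≤ d)
    (he₁ : {i : Fin N | q₁.eval (α i) ≠ w i}.ncard ≤ r)
    (he₂ : {i : Fin N | q₂.eval (α i) ≠ w i}.ncard ≤ r) :
    q₁ = q₂ :=
  stmt_6_general (hN.trans_eq (Fintype.card_fin N).symm) hα hq₁ hq₂ he₁ he₂
end

section
/- Let F be a field, d and r natural numbers, and α_1,…,α_N distinct elements of F with 1 ≤ N ≤ d + 2r. Then there exist values w_1,…,w_N ∈ F and two distinct polynomials q_1 ≠ q_2 over F, each of degree at most d, such that the number of indices i with q_1(α_i) ≠ w_i is at most r and the number of indices i with q_2(α_i) ≠ w_i is at most r. (Hence unique decoding of a degree-d polynomial from N shares with up to r errors is impossible when N ≤ d + 2r; together with the matching uniqueness result this shows error correction is possible if and only if N ≥ d + 2r + 1.) -/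
open Polynomial

/-!
The product `q` of the factors `X - α i` over `min d N` of the indices vanishes at all but at most
`2r` of the positions, so it is a nonzero codeword at Hamming distance at most `2r` from the zero
codeword. Changing `0` into `q` on half of the positions where they differ gives a word within
distance `r` of both.
-/

theorem ncard_setOf_ne_eq_hammingDist {ι : Type*} [Fintype ι] {β : ι → Type*}
    [∀ i, DecidableEq (β i)] (x y : ∀ i, β i) : {i | x i ≠ y i}.ncard = hammingDist x y := by
  rw [hammingDist, ← Set.ncard_coe_finset, Finset.coe_filter_univ]

theorem exists_hammingDist_le_le {ι : Type*} [Fintype ι] {β : ι → Type*}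
    [∀ i, DecidableEq (β i)] {x z : ∀ i, β i} {a b : ℕ} (hxz : hammingDist x z ≤ a + b) :
    ∃ y, hammingDist x y ≤ a ∧ hammingDist y z ≤ b := by
  classical
  let D : Finset ι := {i | x i ≠ z i}
  obtain ⟨T, hTD, hT⟩ := Finset.exists_subset_card_eq (min_le_right a D.card)
  have hD : D.card ≤ a + b := hxz
  refine ⟨T.piecewise z x, ?_, ?_⟩
  · calc
      hammingDist x (T.piecewise z x) ≤ T.card := Finset.card_le_card fun i hi => by
        by_contra hiT
        simp [hiT] at hi
      _ ≤ a := by omega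
  · calc
      hammingDist (T.piecewise z x) z ≤ (D \ T).card := Finset.card_le_card fun i hi => by
        by_cases hiT : i ∈ T
        · simp [hiT] at hi
        · simpa [D, hiT] using hi
      _ = D.card - T.card := Finset.card_sdiff_of_subset hTD
      _ ≤ b := by omega

theorem hammingNorm_eval_nodal_le {ι R : Type*} [Fintype ι] [DecidableEq ι] [CommRing R]
    [DecidableEq R] (S : Finset ι) (α : ι → R) :
    hammingNorm (fun i => (Lagrange.nodal S α).eval (α i)) ≤ Sᶜ.card := by
  refine Finset.card_le_card fun i hi => Finset.mem_compl.mpr fun hiS => ?_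
  exact (Finset.mem_filter.mp hi).2 (Lagrange.eval_nodal_at_node hiS)

theorem exists_monic_natDegree_le_hammingNorm_eval_le {ι R : Type*} [Fintype ι] [CommRing R]
    [Nontrivial R] [DecidableEq R] {d e : ℕ} (hι : Fintype.card ι ≤ d + e) (α : ι → R) :
    ∃ q : R[X], q.Monic ∧ q.natDegree ≤ d ∧ hammingNorm (fun i => q.eval (α i)) ≤ e := by
  classical
  obtain ⟨S, -, hS⟩ := Finset.exists_subset_card_eq (min_le_right d (Finset.univ : Finset ι).card)
  rw [Finset.card_univ] at hS
  refine ⟨Lagrange.nodal S α, Lagrange.nodal_monic, ?_, ?_⟩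
  · rw [Lagrange.natDegree_nodal]
    omega
  · calc
      hammingNorm (fun i => (Lagrange.nodal S α).eval (α i)) ≤ Sᶜ.card :=
        hammingNorm_eval_nodal_le S α
      _ = Fintype.card ι - S.card := Finset.card_compl S
      _ ≤ e := by omega

theorem stmt_7_general {ι R : Type*} [Fintype ι] [CommRing R] [Nontrivial R] {d r : ℕ}
    (hι : Fintype.card ι ≤ d + 2 * r) (α : ι → R) :
    ∃ (w : ι → R) (q₁ q₂ : R[X]),
      q₁ ≠ q₂ ∧ q₁.natDegree ≤ d ∧ q₂.natDegree ≤ d ∧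
      {i | q₁.eval (α i) ≠ w i}.ncard ≤ r ∧
      {i | q₂.eval (α i) ≠ w i}.ncard ≤ r := by
  classical
  obtain ⟨q, hq_monic, hq_deg, hq_norm⟩ := exists_monic_natDegree_le_hammingNorm_eval_le hι α
  have hq_dist : hammingDist (fun i => (0 : R[X]).eval (α i)) (fun i => q.eval (α i)) ≤ r + r := by
    simpa only [eval_zero, ← Pi.zero_def, hammingDist_zero_left, ← two_mul] using hq_norm
  obtain ⟨w, hw_zero, hw_q⟩ := exists_hammingDist_le_le hq_dist
  refine ⟨w, 0, q, hq_monic.ne_zero.symm, natDegree_zero.trans_le d.zero_le, hq_deg, ?_, ?_⟩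
  · rwa [ncard_setOf_ne_eq_hammingDist]
  · rwa [ncard_setOf_ne_eq_hammingDist, hammingDist_comm]

/-- Impossibility of unique decoding with `N ≤ d + 2r` shares: there exist a received word
`w` and two distinct degree-`≤ d` polynomials each disagreeing with `w` in at most `r`
positions. -/
theorem stmt_7 (F : Type*) [Field F] (d r N : ℕ) (hN1 : 1 ≤ N) (hN : N ≤ d + 2 * r)
    (α : Fin N → F) (hα : Function.Injective α) :
    ∃ (w : Fin N → F) (q₁ q₂ : F[X]),
      q₁ ≠ q₂ ∧ q₁.natDegree ≤ d ∧ q₂.natDegree ≤ d ∧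
      {i : Fin N | q₁.eval (α i) ≠ w i}.ncard ≤ r ∧
      {i : Fin N | q₂.eval (α i) ≠ w i}.ncard ≤ r :=
  stmt_7_general ((Fintype.card_fin N).trans_le hN) α
end

section
/- Let F be a field, α_1,…,α_n distinct nonzero elements of F, t a natural number, and C ⊆ {1,…,n} with |C| ≤ t. Let (f_i)_{i∈C} be polynomials over F of degree at most t with f_i(α_j) = f_j(α_i) for all i, j ∈ C, and let q be a polynomial over F of degree at most t with q(α_i) = f_i(0) for all i ∈ C. Then there exists a symmetric bivariate polynomial F(x,y) over F of degree at most (t,t) (so that F(x,y) = F(y,x)) such that F(0,y) = q(y) and F(x,α_i) = f_i(x) for all i ∈ C. (This is the extension claim underlying the privacy of VSS schemes that embed the Shamir-sharing polynomial q at x = 0 in a random symmetric degree-(t,t) bivariate polynomial and give each party only its row polynomial.) -/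
open Polynomial

/-!
Let `L i` be the Lagrange basis of the nodes `v i`. The polynomial `∑ i, f i (x) * L i (y)` has the
rows `f i` but is not symmetric in general, and adding its transpose `∑ i, L i (x) * f i (y)` spoils
the rows: since `f i (v k) = f k (v i)`, at `y = v k` the transpose is the Lagrange interpolant
`∑ i, f k (v i) * L i (x)` of `f k`. Subtracting `∑ i, ∑ j, f i (v j) * L j (x) * L i (y)`, which is
symmetric by consistency, cancels exactly this excess. No further nodes are needed, so the
construction works over fields too small to contain `t + 1` nodes. For the theorem, `q` is the row
at the extra node `0`.
-/

section Swap

open Polynomial.Bivariate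

variable {R : Type*} [CommSemiring R]

theorem coeff_coeff_swap (P : R[X][Y]) (a b : ℕ) :
    ((swap P).coeff a).coeff b = (P.coeff b).coeff a := by
  induction P using Polynomial.induction_on' with
  | add P Q hP hQ => simp only [map_add, coeff_add, hP, hQ]
  | monomial n p =>
    induction p using Polynomial.induction_on' with
    | add p q hp hq => simp only [map_add, coeff_add, hp, hq]
    | monomial m r =>
      rw [swap_monomial_monomial]
      simp only [coeff_monomial]
      split_ifs <;> simp [coeff_monomial, *]

theorem eval_C_swap (P : R[X][Y]) (a : R) : (swap P).eval (C a) = P.map (evalRingHom a) := by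
  induction P using Polynomial.induction_on' with
  | add P Q hP hQ => simp only [map_add, eval_add, Polynomial.map_add, hP, hQ]
  | monomial n p =>
    rw [swap_monomial, eval_mul, eval_C, eval_map, eval₂_at_apply, map_monomial, coe_evalRingHom,
      C_mul_X_pow_eq_monomial]

theorem natDegree_swap_le {P : R[X][Y]} {d : ℕ} (hP : ∀ k, (P.coeff k).natDegree ≤ d) :
    (swap P).natDegree ≤ d := by
  refine natDegree_le_iff_coeff_eq_zero.mpr fun a ha => ?_
  ext b
  rw [coeff_coeff_swap, coeff_zero, coeff_eq_zero_of_natDegree_lt ((hP b).trans_lt ha)]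

end Swap

section RowInterpolation

open Polynomial.Bivariate

variable {F ι : Type*} [Field F] [DecidableEq ι] {s : Finset ι} {v : ι → F} {d : ℕ}

theorem natDegree_interpolate_le (hv : Set.InjOn v s) (hs : s.card ≤ d + 1) (r : ι → F) :
    (Lagrange.interpolate s v r).natDegree ≤ d := by
  refine natDegree_le_iff_coeff_eq_zero.mpr fun k hk => coeff_eq_zero_of_degree_lt ?_
  calc (Lagrange.interpolate s v r).degree < s.card := Lagrange.degree_interpolate_lt r hv
    _ ≤ k := by exact_mod_cast hs.trans hk

/-- The Lagrange interpolant `∑ i ∈ s, f i (x) * L i (y)` in the variable `y`, whose values at the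
nodes `v i` are the polynomials `f i` in `x`. -/
noncomputable def interpolateRows (s : Finset ι) (v : ι → F) (f : ι → F[X]) : F[X][Y] :=
  ∑ i ∈ s, C (f i) * (Lagrange.basis s v i).map C

theorem eval_interpolateRows_node (hv : Set.InjOn v s) (f : ι → F[X]) {k : ι} (hk : k ∈ s) :
    (interpolateRows s v f).eval (C (v k)) = f k := by
  simp only [interpolateRows, eval_finsetSum, eval_mul, eval_C, eval_map, eval₂_at_apply]
  rw [Finset.sum_eq_single_of_mem k hk, Lagrange.eval_basis_self hv hk, C_1, mul_one]
  intro i _ hik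
  rw [Lagrange.eval_basis_of_ne hik hk, C_0, mul_zero]

theorem natDegree_coeff_interpolateRows_le {f : ι → F[X]} (hf : ∀ i ∈ s, (f i).natDegree ≤ d)
    (k : ℕ) : ((interpolateRows s v f).coeff k).natDegree ≤ d := by
  simp only [interpolateRows, finsetSum_coeff, coeff_C_mul, coeff_map]
  exact natDegree_sum_le_of_forall_le s _ fun i hi => (natDegree_mul_C_le _ _).trans (hf i hi)

theorem swap_interpolateRows (f : ι → F[X]) :
    swap (interpolateRows s v f) = ∑ i ∈ s, (f i).map C * C (Lagrange.basis s v i) := by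
  simp only [interpolateRows, map_sum, map_mul, swap_C, swap_map_C]

theorem coeff_swap_interpolateRows (f : ι → F[X]) (k : ℕ) :
    (swap (interpolateRows s v f)).coeff k = Lagrange.interpolate s v fun i => (f i).coeff k := by
  simp only [swap_interpolateRows, Lagrange.interpolate_apply, finsetSum_coeff, coeff_mul_C,
    coeff_map]

theorem eval_swap_interpolateRows (f : ι → F[X]) (a : F) :
    (swap (interpolateRows s v f)).eval (C a) =
      Lagrange.interpolate s v fun i => (f i).eval a := by
  simp only [swap_interpolateRows, Lagrange.interpolate_apply, eval_finsetSum, eval_mul, eval_C,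
    eval_map, eval₂_at_apply]

theorem swap_interpolateRows_interpolate {m : ι → ι → F} (hm : ∀ i ∈ s, ∀ j ∈ s, m i j = m j i) :
    swap (interpolateRows s v fun i => Lagrange.interpolate s v (m i)) =
      interpolateRows s v fun i => Lagrange.interpolate s v (m i) := by
  rw [swap_interpolateRows, interpolateRows]
  simp only [Lagrange.interpolate_apply, Polynomial.map_sum, Polynomial.map_mul, map_C, map_sum,
    map_mul, Finset.sum_mul]
  rw [Finset.sum_comm]
  refine Finset.sum_congr rfl fun i hi => Finset.sum_congr rfl fun j hj => ?_
  rw [hm i hi j hj]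
  ring

/-- The symmetric interpolant of rows `f i` at the nodes `v i`: the Boolean sum of the
interpolations in `y` and in `x`. It has the rows `f i` when these are consistent, that is, when
`f i (v j) = f j (v i)` for all `i` and `j`. -/
noncomputable def symmetricInterpolant (s : Finset ι) (v : ι → F) (f : ι → F[X]) : F[X][Y] :=
  interpolateRows s v f + swap (interpolateRows s v f) -
    interpolateRows s v fun i => Lagrange.interpolate s v fun j => (f i).eval (v j)

theorem natDegree_coeff_symmetricInterpolant_le (hv : Set.InjOn v s) (hs : s.card ≤ d + 1)
    {f : ι → F[X]} (hf : ∀ i ∈ s, (f i).natDegree ≤ d) (k : ℕ) :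
    ((symmetricInterpolant s v f).coeff k).natDegree ≤ d := by
  rw [symmetricInterpolant, coeff_sub, coeff_add, coeff_swap_interpolateRows]
  refine (natDegree_sub_le_of_le (natDegree_add_le_of_degree_le ?_ ?_) ?_).trans_eq (max_self d)
  · exact natDegree_coeff_interpolateRows_le hf k
  · exact natDegree_interpolate_le hv hs _
  · exact natDegree_coeff_interpolateRows_le (fun i _ => natDegree_interpolate_le hv hs _) k

theorem swap_symmetricInterpolant {f : ι → F[X]}
    (hf : ∀ i ∈ s, ∀ j ∈ s, (f i).eval (v j) = (f j).eval (v i)) :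
    swap (symmetricInterpolant s v f) = symmetricInterpolant s v f := by
  rw [symmetricInterpolant, map_sub, map_add, swap_swap_apply,
    swap_interpolateRows_interpolate hf, add_comm (swap _)]

theorem eval_symmetricInterpolant_node (hv : Set.InjOn v s) {f : ι → F[X]}
    (hf : ∀ i ∈ s, ∀ j ∈ s, (f i).eval (v j) = (f j).eval (v i)) {k : ι} (hk : k ∈ s) :
    (symmetricInterpolant s v f).eval (C (v k)) = f k := by
  have hcol : (Lagrange.interpolate s v fun i => (f i).eval (v k)) =
      Lagrange.interpolate s v fun i => (f k).eval (v i) :=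
    Lagrange.interpolate_eq_of_values_eq_on _ _ fun i hi => hf i hi k hk
  rw [symmetricInterpolant, eval_sub, eval_add, eval_swap_interpolateRows,
    eval_interpolateRows_node hv _ hk, eval_interpolateRows_node hv _ hk, hcol,
    add_sub_cancel_right]

end RowInterpolation

/-- Extension lemma for symmetric bivariate sharing: given at most `t` pairwise-consistent
row polynomials `f i` (degree ≤ t) and any degree-`≤ t` polynomial `q` with
`q (α i) = f i (0)`, there is a symmetric bivariate polynomial of degree at most `(t,t)`
with `F(0,y) = q(y)` and rows `f i`.
A bivariate polynomial `F(x,y)` is represented as `P : Polynomial (Polynomial F)`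
(polynomial in `y` with coefficients polynomials in `x`): `F(x, α) = P.eval (C α)`,
`F(0, y) = P.map (evalRingHom 0)`, and symmetry means the coefficient of `x^a y^b` equals
that of `x^b y^a` for all `a, b`. -/
theorem stmt_10 (F : Type*) [Field F] (n t : ℕ)
    (α : Fin n → F) (hα : Function.Injective α) (hα0 : ∀ i, α i ≠ 0)
    (Cs : Finset (Fin n)) (hCs : Cs.card ≤ t)
    (f : Fin n → F[X]) (hf : ∀ i ∈ Cs, (f i).natDegree ≤ t)
    (hcons : ∀ i ∈ Cs, ∀ j ∈ Cs, (f i).eval (α j) = (f j).eval (α i))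
    (q : F[X]) (hq : q.natDegree ≤ t) (hqv : ∀ i ∈ Cs, q.eval (α i) = (f i).eval 0) :
    ∃ P : Polynomial (Polynomial F),
      (∀ k, (P.coeff k).natDegree ≤ t) ∧ P.natDegree ≤ t ∧
      (∀ a b, (P.coeff a).coeff b = (P.coeff b).coeff a) ∧
      P.map (evalRingHom 0) = q ∧
      (∀ i ∈ Cs, P.eval (Polynomial.C (α i)) = f i) := by
  let s := Finset.insertNone Cs
  let v : Option (Fin n) → F := fun o => o.elim 0 α
  let g : Option (Fin n) → F[X] := fun o => o.elim q f
  have hs : s.card ≤ t + 1 := by simpa [s] using hCs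
  have hv : Set.InjOn v s := by
    rintro (_ | i) - (_ | j) - h
    exacts [rfl, absurd h.symm (hα0 j), absurd h (hα0 i), congrArg some (hα h)]
  have hgdeg : ∀ i ∈ s, (g i).natDegree ≤ t := Finset.forall_mem_insertNone.mpr ⟨hq, hf⟩
  have hgcons : ∀ i ∈ s, ∀ j ∈ s, (g i).eval (v j) = (g j).eval (v i) := by
    refine Finset.forall_mem_insertNone.mpr
      ⟨Finset.forall_mem_insertNone.mpr ⟨rfl, hqv⟩, fun i hi => ?_⟩
    exact Finset.forall_mem_insertNone.mpr ⟨(hqv i hi).symm, hcons i hi⟩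
  have hdeg := natDegree_coeff_symmetricInterpolant_le hv hs hgdeg
  have hsymm := swap_symmetricInterpolant hgcons
  have hrow {i : Option (Fin n)} (hi : i ∈ s) := eval_symmetricInterpolant_node hv hgcons hi
  refine ⟨symmetricInterpolant s v g, hdeg, hsymm ▸ natDegree_swap_le hdeg, fun a b => ?_, ?_,
    fun i hi => hrow (Finset.some_mem_insertNone.mpr hi)⟩
  · rw [← coeff_coeff_swap, hsymm]
  · rw [← eval_C_swap, hsymm]
    exact hrow Finset.none_mem_insertNone
end

section
/- Let F be a field, t a natural number, d ≥ t, and L a natural number with L ≤ d + 1 − t. Let α_1,…,α_n be distinct nonzero elements of F and β_1,…,β_L distinct elements of F with β_k ≠ α_i for all k and i. Let C ⊆ {1,…,n} with |C| ≤ t. Let (f_i)_{i∈C} be polynomials over F of degree at most d and (g_i)_{i∈C} polynomials over F of degree at most t satisfying f_i(α_j) = g_j(α_i) for all i, j ∈ C. Then for all polynomials q_1,…,q_L over F of degree at most t satisfying q_k(α_i) = f_i(β_k) for all i ∈ C and all 1 ≤ k ≤ L, there exists a bivariate polynomial F(x,y) over F of degree at most (d,t) such that F(x,α_i) = f_i(x)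 and F(α_i,y) = g_i(y) for all i ∈ C, and F(β_k,y) = q_k(y) for all 1 ≤ k ≤ L. (This is the degrees-of-freedom claim underlying the batched AVSS of Choudhury–Hirt–Patra: a degree-(d,t) bivariate polynomial with d = n − 2t − 1 can hide L = n − 3t independent degree-t Shamir-sharing polynomials at the evaluation points β_1,…,β_L from an adversary learning at most t row and column polynomials.) -/
open Polynomial

/-!
The columns are interpolated first, by a polynomial `Q` of degree at most `(d, t)`, with Lagrange
basis polynomials in `x`. Then `Q` is corrected along the rows by Lagrange basis polynomials in `y`,
weighted by the row errors `f i - Q(x, a i)`. Consistency says exactly that these errors vanish at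
the column nodes, so the correction leaves the columns of `Q` unchanged.
-/

section SeparatedSum

variable {R ι : Type*} [CommSemiring R]

/-- The bivariate polynomial `∑ i ∈ s, p i (x) * q i (y)` attached to finite families of univariate
polynomials, the common shape of interpolants by rows and by columns. As an element of `R[X][X]`
its outer variable is `y`. -/
noncomputable def separatedSum (s : Finset ι) (p q : ι → R[X]) : R[X][X] :=
  ∑ i ∈ s, C (p i) * (q i).map C

variable {s : Finset ι} {p q : ι → R[X]} {m : ℕ}

lemma natDegree_coeff_separatedSum_le (hp : ∀ i ∈ s, (p i).natDegree ≤ m) (k : ℕ) :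
    ((separatedSum s p q).coeff k).natDegree ≤ m := by
  simp only [separatedSum, finsetSum_coeff, coeff_C_mul, coeff_map]
  exact natDegree_sum_le_of_forall_le s _ fun i hi => (natDegree_mul_C_le _ _).trans (hp i hi)

lemma natDegree_separatedSum_le (hq : ∀ i ∈ s, (q i).natDegree ≤ m) :
    (separatedSum s p q).natDegree ≤ m :=
  natDegree_sum_le_of_forall_le s _ fun i hi =>
    (natDegree_C_mul_le _ _).trans (natDegree_map_le.trans (hq i hi))

lemma eval_C_separatedSum (s : Finset ι) (p q : ι → R[X]) (b : R) :
    (separatedSum s p q).eval (C b) = ∑ i ∈ s, (q i).eval b • p i := by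
  simp only [separatedSum, eval_finsetSum, eval_mul, eval_C, eval_map, eval₂_at_apply,
    smul_eq_C_mul, mul_comm]

lemma map_evalRingHom_separatedSum (s : Finset ι) (p q : ι → R[X]) (a : R) :
    (separatedSum s p q).map (evalRingHom a) = ∑ i ∈ s, (p i).eval a • q i := by
  have evalRingHom_comp_C : (evalRingHom a).comp C = RingHom.id R := by ext; simp
  simp only [separatedSum, Polynomial.map_sum, Polynomial.map_mul, map_C, map_map,
    evalRingHom_comp_C, map_id, coe_evalRingHom, smul_eq_C_mul]

end SeparatedSum

lemma natDegree_eval_C_le_of_natDegree_coeff_le {R : Type*} [CommSemiring R] {P : R[X][X]} {m : ℕ}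
    (hP : ∀ k, (P.coeff k).natDegree ≤ m) (b : R) : (P.eval (C b)).natDegree ≤ m := by
  rw [eval_eq_sum_range]
  refine natDegree_sum_le_of_forall_le _ _ fun k _ => ?_
  rw [← C_pow]
  exact (natDegree_mul_C_le _ _).trans (hP k)

section Lagrange

variable {F ι κ : Type*} [Field F]

lemma natDegree_lagrangeBasis_le [DecidableEq ι] {s : Finset ι} {v : ι → F} {m : ℕ}
    (hv : Set.InjOn v s) (hs : s.card ≤ m + 1) {i : ι} (hi : i ∈ s) :
    (Lagrange.basis s v i).natDegree ≤ m := by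
  rw [Lagrange.natDegree_basis hv hi]
  omega

lemma sum_eval_lagrangeBasis_smul [DecidableEq ι] {M : Type*} [AddCommMonoid M] [Module F M]
    {s : Finset ι} {v : ι → F} (hv : Set.InjOn v s) {j : ι} (hj : j ∈ s) (w : ι → M) :
    ∑ i ∈ s, (Lagrange.basis s v i).eval (v j) • w i = w j := by
  rw [Finset.sum_eq_single_of_mem j hj, Lagrange.eval_basis_self hv hj, one_smul]
  intro i _ hij
  rw [Lagrange.eval_basis_of_ne hij hj, zero_smul]

theorem exists_bivariate_of_columns {S : Finset ι} {v : ι → F} {h : ι → F[X]} {d t : ℕ}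
    (hv : Set.InjOn v S) (hS : S.card ≤ d + 1) (hh : ∀ s ∈ S, (h s).natDegree ≤ t) :
    ∃ Q : F[X][X], (∀ k, (Q.coeff k).natDegree ≤ d) ∧ Q.natDegree ≤ t ∧
      ∀ s ∈ S, Q.map (evalRingHom (v s)) = h s := by
  classical
  refine ⟨separatedSum S (Lagrange.basis S v) h,
    natDegree_coeff_separatedSum_le fun s hs => natDegree_lagrangeBasis_le hv hS hs,
    natDegree_separatedSum_le hh, fun s hs => ?_⟩
  rw [map_evalRingHom_separatedSum, sum_eval_lagrangeBasis_smul hv hs]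

theorem exists_bivariate_of_rows {T : Finset κ} {a : κ → F} {f : κ → F[X]} {d t : ℕ}
    (ha : Set.InjOn a T) (hT : T.card ≤ t + 1) (hf : ∀ i ∈ T, (f i).natDegree ≤ d) :
    ∃ Q : F[X][X], (∀ k, (Q.coeff k).natDegree ≤ d) ∧ Q.natDegree ≤ t ∧
      (∀ i ∈ T, Q.eval (C (a i)) = f i) ∧
      ∀ x, (∀ i ∈ T, (f i).eval x = 0) → Q.map (evalRingHom x) = 0 := by
  classical
  refine ⟨separatedSum T f (Lagrange.basis T a), natDegree_coeff_separatedSum_le hf,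
    natDegree_separatedSum_le fun i hi => natDegree_lagrangeBasis_le ha hT hi,
    fun i hi => ?_, fun x hx => ?_⟩
  · rw [eval_C_separatedSum, sum_eval_lagrangeBasis_smul ha hi]
  · rw [map_evalRingHom_separatedSum]
    exact Finset.sum_eq_zero fun i hi => by rw [hx i hi, zero_smul]

theorem exists_bivariate_of_rows_of_columns {S : Finset ι} {T : Finset κ} {v : ι → F} {a : κ → F}
    {h : ι → F[X]} {f : κ → F[X]} {d t : ℕ}
    (hv : Set.InjOn v S) (hS : S.card ≤ d + 1) (ha : Set.InjOn a T) (hT : T.card ≤ t + 1)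
    (hh : ∀ s ∈ S, (h s).natDegree ≤ t) (hf : ∀ i ∈ T, (f i).natDegree ≤ d)
    (hfh : ∀ s ∈ S, ∀ i ∈ T, (f i).eval (v s) = (h s).eval (a i)) :
    ∃ P : F[X][X], (∀ k, (P.coeff k).natDegree ≤ d) ∧ P.natDegree ≤ t ∧
      (∀ i ∈ T, P.eval (C (a i)) = f i) ∧ ∀ s ∈ S, P.map (evalRingHom (v s)) = h s := by
  obtain ⟨Q, hQx, hQy, hQcol⟩ := exists_bivariate_of_columns hv hS hh
  have natDegree_error_le : ∀ i ∈ T, (f i - Q.eval (C (a i))).natDegree ≤ d := fun i hi =>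
    (natDegree_sub_le _ _).trans
      (max_le (hf i hi) (natDegree_eval_C_le_of_natDegree_coeff_le hQx (a i)))
  have error_eq_zero : ∀ s ∈ S, ∀ i ∈ T, (f i - Q.eval (C (a i))).eval (v s) = 0 := by
    intro s hs i hi
    rw [eval_sub, hfh s hs i hi, ← hQcol s hs, map_evalRingHom_eval, evalEval, sub_self]
  obtain ⟨E, hEx, hEy, hErow, hEcol⟩ := exists_bivariate_of_rows ha hT natDegree_error_le
  refine ⟨Q + E, fun k => ?_, natDegree_add_le_of_degree_le hQy hEy, fun i hi => ?_,
    fun s hs => ?_⟩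
  · rw [coeff_add]
    exact natDegree_add_le_of_degree_le (hQx k) (hEx k)
  · rw [eval_add, hErow i hi, add_sub_cancel]
  · rw [Polynomial.map_add, hQcol s hs, hEcol (v s) (error_eq_zero s hs), add_zero]

end Lagrange

theorem stmt_11_general {F ι κ : Type*} [Field F] [Fintype κ] {t d : ℕ}
    {α : ι → F} {β : κ → F} {Cs : Finset ι} (hα : Set.InjOn α Cs) (hβ : Function.Injective β)
    (hβα : ∀ k, ∀ i ∈ Cs, β k ≠ α i)
    (hCs : Cs.card ≤ t + 1) (hCsκ : Cs.card + Fintype.card κ ≤ d + 1) {f g : ι → F[X]}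
    (hf : ∀ i ∈ Cs, (f i).natDegree ≤ d) (hg : ∀ i ∈ Cs, (g i).natDegree ≤ t)
    (hcons : ∀ i ∈ Cs, ∀ j ∈ Cs, (f i).eval (α j) = (g j).eval (α i))
    {q : κ → F[X]} (hq : ∀ k, (q k).natDegree ≤ t)
    (hqv : ∀ k, ∀ i ∈ Cs, (q k).eval (α i) = (f i).eval (β k)) :
    ∃ P : F[X][X],
      (∀ k, (P.coeff k).natDegree ≤ d) ∧ P.natDegree ≤ t ∧
      (∀ i ∈ Cs, P.eval (C (α i)) = f i) ∧
      (∀ i ∈ Cs, P.map (evalRingHom (α i)) = g i) ∧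
      (∀ k, P.map (evalRingHom (β k)) = q k) := by
  let S : Finset (ι ⊕ κ) := Cs.disjSum Finset.univ
  have card_S : S.card ≤ d + 1 := by rwa [Finset.card_disjSum, Finset.card_univ]
  have forall_mem_S {p : ι ⊕ κ → Prop} :
      (∀ s ∈ S, p s) ↔ (∀ i ∈ Cs, p (.inl i)) ∧ ∀ k, p (.inr k) := by
    simp [S]
  have injOn_nodes : Set.InjOn (Sum.elim α β) S := by
    refine (Set.InjOn.sumElim (s := ((Cs : Set ι), Set.univ)) hα hβ.injOn
      fun i hi k _ => (hβα k i hi).symm).mono ?_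
    exact forall_mem_S.2 ⟨fun i hi => by simpa using hi, fun k => by simp⟩
  obtain ⟨P, hPx, hPy, hrow, hcol⟩ := exists_bivariate_of_rows_of_columns (h := Sum.elim g q)
    injOn_nodes card_S hα hCs (forall_mem_S.2 ⟨hg, fun k => hq k⟩) hf
    (forall_mem_S.2 ⟨fun j hj i hi => hcons i hi j hj, fun k i hi => (hqv k i hi).symm⟩)
  exact ⟨P, hPx, hPy, hrow, forall_mem_S.1 hcol⟩

/-- Degrees-of-freedom claim behind the batched CHP AVSS: given at most `t` consistent row
polynomials `f i` (degree ≤ d) and column polynomials `g i` (degree ≤ t), and any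
`L ≤ d + 1 - t` degree-`≤ t` polynomials `q k` with `q k (α i) = f i (β k)`, there is a
bivariate polynomial of degree at most `(d,t)` with the given rows and columns and with
`F(β k, y) = q k (y)` for all `k`.
A bivariate polynomial `F(x,y)` is represented as `P : Polynomial (Polynomial F)`
(polynomial in `y` with coefficients polynomials in `x`): `F(x, α) = P.eval (C α)` and
`F(β, y) = P.map (evalRingHom β)`. -/
theorem stmt_11 (F : Type*) [Field F] (n t d L : ℕ) (htd : t ≤ d) (hL : L ≤ d + 1 - t)
    (α : Fin n → F) (hα : Function.Injective α) (hα0 : ∀ i, α i ≠ 0)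
    (β : Fin L → F) (hβ : Function.Injective β) (hβα : ∀ k i, β k ≠ α i)
    (Cs : Finset (Fin n)) (hCs : Cs.card ≤ t)
    (f g : Fin n → F[X])
    (hf : ∀ i ∈ Cs, (f i).natDegree ≤ d) (hg : ∀ i ∈ Cs, (g i).natDegree ≤ t)
    (hcons : ∀ i ∈ Cs, ∀ j ∈ Cs, (f i).eval (α j) = (g j).eval (α i))
    (q : Fin L → F[X]) (hq : ∀ k, (q k).natDegree ≤ t)
    (hqv : ∀ k, ∀ i ∈ Cs, (q k).eval (α i) = (f i).eval (β k)) :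
    ∃ P : Polynomial (Polynomial F),
      (∀ k, (P.coeff k).natDegree ≤ d) ∧ P.natDegree ≤ t ∧
      (∀ i ∈ Cs, P.eval (Polynomial.C (α i)) = f i) ∧
      (∀ i ∈ Cs, P.map (evalRingHom (α i)) = g i) ∧
      (∀ k, P.map (evalRingHom (β k)) = q k) := by
  exact stmt_11_general hα.injOn hβ (fun k i _ => hβα k i) (by omega)
    (by rw [Fintype.card_fin]; omega) hf hg hcons hq hqv
end
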